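/- **Setting.** Let $L$ be a finite set of input actions with complementary outputs $\overline L$, let $Act = L\cup\overline L\cup\{\tau\}$, and let $\mathcal C$ be a finite set of process constants. FNM has guarded terms $s ::= \mathbf 0 \mid \mu.t \mid \underline a.s \mid s+s$ ($\mu\in Act$, $a\in L$), sequential terms $q ::= s \mid C$, restriction-free terms $t ::= q \mid t\,|\,t$ and general terms $p ::= t \mid (\nu a)p$; each constant $C$ has a defining equation $C\doteq s$ with $s$ a closed guarded term. Open terms allow in addition a variable $x$ as a sequential term, and $p\{r/x\}$ is the substitution of the closed sequential term $r$ for $x$ in $p$. Each name $a$ has a restricted counterpart $a'$, and extended terms may use restricted names as well, but no extended term uses both $a$ and $a'$ free (free names are taken through the bodies of constants). Places are the closed sequential extended terms other than $\mathbf 0$; markings are finite multisets of places. The decomposition is $dec(\mathbf 0)=\theta$ (the empty marking), $dec(q)=\{q\}$ for every other sequential $q$, $dec(p\,|\,q)=dec(p)\oplus dec(q)$, $dec((\nu a)p)=dec(p)\{a'/a\}$. The derivable transitions between markings are generated by: $\{\mu.p\}\xrightarrow{\mu}dec(p)$; $\{p+q\}\xrightarrow{\sigma}m$ if $dec(p)\xrightarrow{\sigma}m$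 or $dec(q)\xrightarrow{\sigma}m$; $\{C\}\xrightarrow{\sigma}m$ if $C\doteq p$ and $dec(p)\xrightarrow{\sigma}m$; $\{\underline\gamma.p\}\xrightarrow{\gamma\diamond\sigma}m$ if $dec(p)\xrightarrow{\sigma}m$, where $\gamma\diamond\tau=\gamma$ and $\gamma\diamond\sigma=\gamma\sigma$ for $\sigma\ne\tau$; and $m_1\oplus m_2\xrightarrow{\sigma}m_1'\oplus m_2'$ if $m_i\xrightarrow{\sigma_i}m_i'$ for $i=1,2$, no name occurs free in $m_1\oplus m_2$ both as $a$ and as $a'$, and $Sync(\sigma_1,\sigma_2,\sigma)$, where $Sync$ consists of $Sync(\alpha,\overline\alpha,\tau)$ and, for $\sigma\neq\varepsilon$, $Sync(\gamma\sigma,\overline\gamma,\sigma)$ and $Sync(\overline\gamma,\gamma\sigma,\sigma)$. The transitions of the net are the derivable ones whose label contains no restricted action. A linking is a finite multiset of pairs of places, with projections $\pi_1,\pi_2$. A structure-preserving bisimulation is a set $R$ of linkings such that for all $l\in R$ and $c\subseteq l$: for every net transition $\pi_1(c)\xrightarrow{\sigma}m_1$ there are a net transition $\pi_2(c)\xrightarrow{\sigma}m_2$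 and a linking $\overline c$ with $\pi_1(\overline c)=m_1$, $\pi_2(\overline c)=m_2$ and $(l\ominus c)\oplus\overline c\in R$, and symmetrically. Write $p\sim_{sp}q$ if some structure-preserving bisimulation contains a linking $l$ with $\pi_1(l)=dec(p)$ and $\pi_2(l)=dec(q)$. **Statement.** For every process constant $C$: - (stuck) if $C\doteq\mathbf 0$, then $C\sim_{sp}\mathbf 0+\mathbf 0$; - (unfolding) if $C\doteq p$, where $p$ is a closed guarded term and $p\neq\mathbf 0$, then $C\sim_{sp}p$; - (folding) if $C\doteq p\{C/x\}$, where $p\neq\mathbf 0$ is an open guarded term with no variable other than $x$ (for instance, any such term in which $x$ occurs), and $q$ is a closed sequential term with $q\sim_{sp}p\{q/x\}$, then $C\sim_{sp}q$. -/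

import Mathlib

/-- Actions of FNM: the invisible action `τ`, inputs `a ∈ L` and outputs `ā`
(the type `α` plays the role of the finite set `L` of names). -/
inductive Act (α : Type*) where
  | tau : Act α
  | inp : α → Act α
  | out : α → Act α

/-- Raw (open) FNM terms over the names `α` and the constants `κ`: `0`, the variable
`x`, action prefixing `μ.t`, strong prefixing `a̲.s`, choice `s + s`, constants `C`,
parallel composition `t | t` and restriction `(νa)p`. The syntactic categories are
the predicates below. -/
inductive FNM (α κ : Type*) where
  | nil : FNM α κ
  | var : FNM α κ
  | pref : Act α → FNM α κ → FNM α κ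
  | spref : α → FNM α κ → FNM α κ
  | sum : FNM α κ → FNM α κ → FNM α κ
  | const : κ → FNM α κ
  | par : FNM α κ → FNM α κ → FNM α κ
  | res : α → FNM α κ → FNM α κ

namespace FNM

variable {α κ : Type*}

mutual
  /-- (Open) guarded terms `s ::= 0 | μ.t | a̲.s | s + s`. -/
  def Grd : FNM α κ → Prop
    | .nil => True
    | .var => False
    | .pref _ t => RF t
    | .spref _ s => Grd s
    | .sum s1 s2 => Grd s1 ∧ Grd s2
    | .const _ => False
    | .par _ _ => False
    | .res _ _ => False
  /-- (Open) restriction-free terms `t ::= q | t | t`, with `q ::= s | C | x`. -/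
  def RF : FNM α κ → Prop
    | .nil => True
    | .var => True
    | .pref _ t => RF t
    | .spref _ s => Grd s
    | .sum s1 s2 => Grd s1 ∧ Grd s2
    | .const _ => True
    | .par t1 t2 => RF t1 ∧ RF t2
    | .res _ _ => False
end

/-- (Open) sequential terms `q ::= s | C | x`. -/
def SeqTerm (t : FNM α κ) : Prop :=
  Grd t ∨ (∃ c, t = FNM.const c) ∨ t = FNM.var

/-- Closed terms: the variable does not occur. -/
def VarFree : FNM α κ → Prop
  | .nil => True
  | .var => False
  | .pref _ t => VarFree t
  | .spref _ s => VarFree s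
  | .sum s1 s2 => VarFree s1 ∧ VarFree s2
  | .const _ => True
  | .par t1 t2 => VarFree t1 ∧ VarFree t2
  | .res _ p => VarFree p

/-- Substitution: `subst r p` is `p{r/x}`. Bodies of constants are closed, so constants
are not affected. -/
def subst (r : FNM α κ) : FNM α κ → FNM α κ
  | .nil => .nil
  | .var => r
  | .pref mu t => .pref mu (subst r t)
  | .spref a s => .spref a (subst r s)
  | .sum s1 s2 => .sum (subst r s1) (subst r s2)
  | .const c => .const c
  | .par t1 t2 => .par (subst r t1) (subst r t2)
  | .res a p => .res a (subst r p)

/-- The action `μ` is `a` or `ā`. -/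
def _root_.Act.uses (a : α) : Act α → Prop
  | .tau => False
  | .inp b => b = a
  | .out b => b = a

/-- The name `a` occurs free in a term, where `env c` is the body of the constant `c`. -/
inductive FreeIn (env : κ → FNM α κ) (a : α) : FNM α κ → Prop where
  | pref_act {mu : Act α} {t : FNM α κ} : mu.uses a → FreeIn env a (.pref mu t)
  | pref_cont {mu : Act α} {t : FNM α κ} : FreeIn env a t → FreeIn env a (.pref mu t)
  | spref_act {s : FNM α κ} : FreeIn env a (.spref a s)
  | spref_cont {b : α} {s : FNM α κ} : FreeIn env a s → FreeIn env a (.spref b s)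
  | sum_l {s1 s2 : FNM α κ} : FreeIn env a s1 → FreeIn env a (.sum s1 s2)
  | sum_r {s1 s2 : FNM α κ} : FreeIn env a s2 → FreeIn env a (.sum s1 s2)
  | par_l {t1 t2 : FNM α κ} : FreeIn env a t1 → FreeIn env a (.par t1 t2)
  | par_r {t1 t2 : FNM α κ} : FreeIn env a t2 → FreeIn env a (.par t1 t2)
  | res {b : α} {p : FNM α κ} : a ≠ b → FreeIn env a p → FreeIn env a (.res b p)
  | const {c : κ} : FreeIn env a (env c) → FreeIn env a (.const c)

/-- The set `fn(t)` of free names of a term over unrestricted names. -/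
def fn (env : κ → FNM α κ) (t : FNM α κ) : Set α := {a | FreeIn env a t}

end FNM

/-- Extended sequential terms. By admissibility each name occurs in an extended term
either always as `a` or always as its restricted counterpart `a'`; so such a term is
an ordinary term `term` together with the set `restr` of those of its free names `a`
that are written `a'`. The actual places of the net are singled out by `IsPlace`. -/
@[ext] structure Place (α κ : Type*) where
  term : FNM α κ
  restr : Set α

/-- Extended visible actions; the Boolean is `true` for the restricted actions
`a'` and their complements, `false` for `a` and `ā`. -/
inductive XAct (α : Type*) where
  | inp : α → Bool → XAct α
  | out : α → Bool → XAct α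

/-- Labels: `τ` is the empty list, any other label is a nonempty sequence of extended
actions. With this encoding `γ ⋄ σ` is `γ :: σ` in all cases. -/
abbrev Lbl (α : Type*) := List (XAct α)

/-- The action is not a restricted one. -/
def XAct.unres {α : Type*} : XAct α → Prop
  | .inp _ r => r = false
  | .out _ r => r = false

open Classical in
/-- The extended input action that `a` stands for, when the names in `ρ` are restricted. -/
noncomputable def xinp {α : Type*} (ρ : Set α) (a : α) : XAct α :=
  .inp a (decide (a ∈ ρ))

open Classical in
/-- The extended output action that `ā` stands for, when the names in `ρ` are
restricted. -/
noncomputable def xout {α : Type*} (ρ : Set α) (a : α) : XAct α :=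
  .out a (decide (a ∈ ρ))

/-- The label of the prefix `μ`, when the names in `ρ` are restricted. -/
noncomputable def actL {α : Type*} (ρ : Set α) : Act α → Lbl α
  | .tau => []
  | .inp a => [xinp ρ a]
  | .out a => [xout ρ a]

/-- The synchronization relation `Sync(σ₁, σ₂, σ)`, also on restricted actions. -/
inductive Sync {α : Type*} : Lbl α → Lbl α → Lbl α → Prop where
  | inout (a : α) (r : Bool) : Sync [XAct.inp a r] [XAct.out a r] []
  | outin (a : α) (r : Bool) : Sync [XAct.out a r] [XAct.inp a r] []
  | seqL (a : α) (r : Bool) (σ : Lbl α) :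
      σ ≠ [] → Sync (XAct.inp a r :: σ) [XAct.out a r] σ
  | seqR (a : α) (r : Bool) (σ : Lbl α) :
      σ ≠ [] → Sync [XAct.out a r] (XAct.inp a r :: σ) σ

namespace FNM

variable {α κ : Type*}

/-- The elements of `S_FNM`: closed sequential extended terms other than `0`. -/
def IsPlace (env : κ → FNM α κ) (s : Place α κ) : Prop :=
  SeqTerm s.term ∧ VarFree s.term ∧ s.term ≠ FNM.nil ∧ s.restr ⊆ fn env s.term

/-- The substitution `{a'/a | a ∈ ρ}` on extended sequential terms. -/
def restrict (env : κ → FNM α κ) (ρ : Set α) (s : Place α κ) : Place α κ :=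
  ⟨s.term, s.restr ∪ (ρ ∩ fn env s.term)⟩

/-- The decomposition function: `dec(0) = θ`, `dec(p|q) = dec(p) ⊕ dec(q)`,
`dec((νa)p) = dec(p){a'/a}`, and `dec(q) = {q}` for the other sequential terms. -/
def dec (env : κ → FNM α κ) : FNM α κ → Multiset (Place α κ)
  | .nil => 0
  | .par t1 t2 => dec env t1 + dec env t2
  | .res a p => (dec env p).map (restrict env {a})
  | t => {⟨t, ∅⟩}

/-- The decomposition of the extended term `t{a'/a | a ∈ ρ}`. -/
def decX (env : κ → FNM α κ) (ρ : Set α) (t : FNM α κ) : Multiset (Place α κ) :=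
  (dec env t).map (restrict env ρ)

/-- A marking is admissible if for no name `a` both `a` and `a'` occur free in it. -/
def Adm (env : κ → FNM α κ) (m : Multiset (Place α κ)) : Prop :=
  ∀ a : α, ¬ ((∃ s ∈ m, a ∈ fn env s.term ∧ a ∉ s.restr) ∧
              (∃ s ∈ m, a ∈ fn env s.term ∧ a ∈ s.restr))

/-- The transitions derivable by the rules (pref), (sum₁), (sum₂), (cons), (s-pref)
and (s-com). -/
inductive Tr (env : κ → FNM α κ) :
    Multiset (Place α κ) → Lbl α → Multiset (Place α κ) → Prop where
  | pref (ρ : Set α) (mu : Act α) (t : FNM α κ) :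
      Tr env {⟨FNM.pref mu t, ρ⟩} (actL ρ mu) (decX env ρ t)
  | sum1 (ρ : Set α) (s1 s2 : FNM α κ) (σ : Lbl α) (m : Multiset (Place α κ)) :
      Tr env (decX env ρ s1) σ m → Tr env {⟨FNM.sum s1 s2, ρ⟩} σ m
  | sum2 (ρ : Set α) (s1 s2 : FNM α κ) (σ : Lbl α) (m : Multiset (Place α κ)) :
      Tr env (decX env ρ s2) σ m → Tr env {⟨FNM.sum s1 s2, ρ⟩} σ m
  | cons (ρ : Set α) (c : κ) (σ : Lbl α) (m : Multiset (Place α κ)) :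
      Tr env (decX env ρ (env c)) σ m → Tr env {⟨FNM.const c, ρ⟩} σ m
  | spref (ρ : Set α) (a : α) (s : FNM α κ) (σ : Lbl α) (m : Multiset (Place α κ)) :
      Tr env (decX env ρ s) σ m → Tr env {⟨FNM.spref a s, ρ⟩} (xinp ρ a :: σ) m
  | scom (m1 m2 m1' m2' : Multiset (Place α κ)) (σ1 σ2 σ : Lbl α) :
      Tr env m1 σ1 m1' → Tr env m2 σ2 m2' → Adm env (m1 + m2) → Sync σ1 σ2 σ →
      Tr env (m1 + m2) σ (m1' + m2')

/-- The transitions of the net `N_FNM`: the derivable ones whose label contains no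
restricted action. -/
def NetTr (env : κ → FNM α κ) (m : Multiset (Place α κ)) (σ : Lbl α)
    (m' : Multiset (Place α κ)) : Prop :=
  Tr env m σ m' ∧ ∀ x ∈ σ, x.unres

/-- First projection of a linking. -/
def pi1 (l : Multiset (Place α κ × Place α κ)) : Multiset (Place α κ) :=
  l.map Prod.fst

/-- Second projection of a linking. -/
def pi2 (l : Multiset (Place α κ × Place α κ)) : Multiset (Place α κ) :=
  l.map Prod.snd

/-- A linking: a finite multiset of pairs of places. -/
def IsLinking (env : κ → FNM α κ) (l : Multiset (Place α κ × Place α κ)) : Prop :=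
  ∀ x ∈ l, IsPlace env x.1 ∧ IsPlace env x.2

open Classical in
/-- Structure-preserving bisimulations on the net `N_FNM`. -/
def IsSPB (env : κ → FNM α κ) (R : Set (Multiset (Place α κ × Place α κ))) : Prop :=
  ∀ l ∈ R, IsLinking env l ∧ ∀ c ≤ l,
    (∀ σ m1, NetTr env (pi1 c) σ m1 →
      ∃ m2 cb, NetTr env (pi2 c) σ m2 ∧
        pi1 cb = m1 ∧ pi2 cb = m2 ∧ l - c + cb ∈ R) ∧
    (∀ σ m2, NetTr env (pi2 c) σ m2 →
      ∃ m1 cb, NetTr env (pi1 c) σ m1 ∧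
        pi1 cb = m1 ∧ pi2 cb = m2 ∧ l - c + cb ∈ R)

/-- `p ~sp q`: some structure-preserving bisimulation contains a linking that projects
on `dec(p)` and `dec(q)`. -/
def SPEq (env : κ → FNM α κ) (p q : FNM α κ) : Prop :=
  ∃ R, IsSPB env R ∧ ∃ l ∈ R, pi1 l = dec env p ∧ pi2 l = dec env q

end FNM

namespace FNM

variable {α κ : Type*}

/-! ### Sequential terms without restricted names -/

/-- The terms of the places without restricted names. -/
def PlaceTerm (t : FNM α κ) : Prop :=
  SeqTerm t ∧ VarFree t ∧ t ≠ FNM.nil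

/-- The place of a term none of whose names is restricted. -/
def unresPlace (t : FNM α κ) : Place α κ := ⟨t, ∅⟩

theorem isPlace_unresPlace {env : κ → FNM α κ} {t : FNM α κ} :
    IsPlace env (unresPlace t) ↔ PlaceTerm t := by
  simp [IsPlace, PlaceTerm, unresPlace]

/-- The sequential components of a restriction-free term. -/
def components : FNM α κ → Multiset (FNM α κ)
  | .nil => 0
  | .par t1 t2 => components t1 + components t2
  | t => {t}

theorem Grd.rf {t : FNM α κ} (h : Grd t) : RF t := by
  cases t <;> simp_all [Grd, RF]

theorem SeqTerm.rf {t : FNM α κ} (h : SeqTerm t) : RF t := by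
  rcases h with h | ⟨c, rfl⟩ | rfl
  · exact h.rf
  · simp [RF]
  · simp [RF]

theorem SeqTerm.components_eq {t : FNM α κ} (h : SeqTerm t) (h0 : t ≠ FNM.nil) :
    components t = {t} := by
  cases t <;> simp_all [components, SeqTerm, Grd]

theorem dec_eq_map_components (env : κ → FNM α κ) {t : FNM α κ} (h : RF t) :
    dec env t = (components t).map unresPlace := by
  induction t <;> simp_all [dec, components, unresPlace, RF]

theorem decX_empty (env : κ → FNM α κ) (t : FNM α κ) : decX env ∅ t = dec env t := by
  have : restrict env ∅ = id := by
    funext s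
    simp [restrict]
  simp [decX, this]

theorem PlaceTerm.dec_eq {t : FNM α κ} (env : κ → FNM α κ) (h : PlaceTerm t) :
    dec env t = {unresPlace t} := by
  rw [dec_eq_map_components env h.1.rf, h.1.components_eq h.2.2, Multiset.map_singleton]

theorem placeTerm_of_mem_components {t s : FNM α κ} (h : RF t) (hv : VarFree t)
    (hs : s ∈ components t) : PlaceTerm s := by
  induction t with
  | par t1 t2 ih1 ih2 =>
    simp only [components, Multiset.mem_add] at hs
    exact hs.elim (ih1 h.1 hv.1) (ih2 h.2 hv.2)
  | _ => simp_all [components, PlaceTerm, SeqTerm, RF, Grd, VarFree]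

/-! ### Transitions of sequential terms -/

/-- Transitions of sequential terms without restricted names, to a term whose
decomposition is the marking reached. -/
inductive Step (env : κ → FNM α κ) : FNM α κ → Lbl α → FNM α κ → Prop where
  | pref (mu : Act α) (t : FNM α κ) : Step env (.pref mu t) (actL ∅ mu) t
  | sum1 {s1 s2 : FNM α κ} {σ : Lbl α} {u : FNM α κ} :
      Step env s1 σ u → Step env (.sum s1 s2) σ u
  | sum2 {s1 s2 : FNM α κ} {σ : Lbl α} {u : FNM α κ} :
      Step env s2 σ u → Step env (.sum s1 s2) σ u
  | cons {c : κ} {σ : Lbl α} {u : FNM α κ} :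
      Step env (env c) σ u → Step env (.const c) σ u
  | spref {a : α} {s : FNM α κ} {σ : Lbl α} {u : FNM α κ} :
      Step env s σ u → Step env (.spref a s) (xinp ∅ a :: σ) u

theorem Step.unres {env : κ → FNM α κ} {t u : FNM α κ} {σ : Lbl α} (h : Step env t σ u) :
    ∀ x ∈ σ, x.unres := by
  induction h with
  | pref mu t => cases mu <;> simp [actL, xinp, xout, XAct.unres]
  | spref _ ih => simpa [xinp, XAct.unres] using ih
  | _ => assumption

theorem Step.rf_varFree {env : κ → FNM α κ} (henv : ∀ c, Grd (env c) ∧ VarFree (env c))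
    {t u : FNM α κ} {σ : Lbl α} (h : Step env t σ u) (ht : SeqTerm t) (hv : VarFree t) :
    RF u ∧ VarFree u := by
  induction h with
  | pref mu t => exact ⟨by simpa [SeqTerm, Grd] using ht, hv⟩
  | sum1 _ ih =>
    simp only [SeqTerm, Grd, reduceCtorEq, exists_false, or_false] at ht
    exact ih (.inl ht.1) hv.1
  | sum2 _ ih =>
    simp only [SeqTerm, Grd, reduceCtorEq, exists_false, or_false] at ht
    exact ih (.inl ht.2) hv.2
  | @cons c _ _ _ ih => exact ih (.inl (henv c).1) (henv c).2
  | spref _ ih =>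
    simp only [SeqTerm, Grd, reduceCtorEq, exists_false, or_false] at ht
    exact ih (.inl ht) hv

theorem Tr.ne_zero {env : κ → FNM α κ} {m m' : Multiset (Place α κ)} {σ : Lbl α}
    (h : Tr env m σ m') : m ≠ 0 := by
  induction h with
  | scom _ _ _ _ _ _ _ _ _ _ _ ih1 _ => simp [ih1]
  | _ => simp

theorem Step.ne_nil {env : κ → FNM α κ} {t u : FNM α κ} {σ : Lbl α} (h : Step env t σ u) :
    t ≠ FNM.nil := by
  cases h <;> simp

theorem Step.tr {env : κ → FNM α κ} (henv : ∀ c, Grd (env c) ∧ VarFree (env c))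
    {t u : FNM α κ} {σ : Lbl α} (h : Step env t σ u) (ht : SeqTerm t) :
    Tr env (dec env t) σ (dec env u) := by
  induction h with
  | pref mu t => simpa only [dec, decX_empty] using Tr.pref (env := env) ∅ mu t
  | sum1 _ ih =>
    simp only [SeqTerm, Grd, reduceCtorEq, exists_false, or_false] at ht
    exact Tr.sum1 _ _ _ _ _ (by simpa only [decX_empty] using ih (.inl ht.1))
  | sum2 _ ih =>
    simp only [SeqTerm, Grd, reduceCtorEq, exists_false, or_false] at ht
    exact Tr.sum2 _ _ _ _ _ (by simpa only [decX_empty] using ih (.inl ht.2))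
  | @cons c _ _ _ ih =>
    exact Tr.cons _ _ _ _ (by simpa only [decX_empty] using ih (.inl (henv c).1))
  | spref _ ih =>
    simp only [SeqTerm, Grd, reduceCtorEq, exists_false, or_false] at ht
    exact Tr.spref _ _ _ _ _ (by simpa only [decX_empty] using ih (.inl ht))

theorem eq_of_singleton_eq_dec {env : κ → FNM α κ} {s t : FNM α κ} {ρ : Set α}
    (ht : SeqTerm t) (h : {⟨s, ρ⟩} = dec env t) : t = s ∧ ρ = ∅ := by
  by_cases h0 : t = FNM.nil
  · subst h0
    simp [dec] at h
  · rw [dec_eq_map_components env ht.rf, ht.components_eq h0, Multiset.map_singleton,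
      Multiset.singleton_inj] at h
    exact ⟨(congrArg Place.term h).symm, congrArg Place.restr h⟩

theorem card_dec_le_one (env : κ → FNM α κ) {t : FNM α κ} (ht : SeqTerm t) :
    (dec env t).card ≤ 1 := by
  by_cases h0 : t = FNM.nil
  · simp [h0, dec]
  · simp [dec_eq_map_components env ht.rf, ht.components_eq h0]

theorem Tr.exists_step {env : κ → FNM α κ} (henv : ∀ c, Grd (env c) ∧ VarFree (env c))
    {m m' : Multiset (Place α κ)} {σ : Lbl α} (h : Tr env m σ m') :
    ∀ t : FNM α κ, SeqTerm t → m = dec env t → ∃ u, Step env t σ u ∧ m' = dec env u := by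
  induction h with
  | pref ρ mu s =>
    intro t ht hm
    obtain ⟨rfl, rfl⟩ := eq_of_singleton_eq_dec ht hm
    exact ⟨_, .pref mu s, decX_empty env s⟩
  | sum1 ρ s1 s2 σ m _ ih =>
    intro t ht hm
    obtain ⟨rfl, rfl⟩ := eq_of_singleton_eq_dec ht hm
    simp only [SeqTerm, Grd, reduceCtorEq, exists_false, or_false] at ht
    obtain ⟨u, hu, h⟩ := ih s1 (.inl ht.1) (decX_empty env s1)
    exact ⟨u, hu.sum1, h⟩
  | sum2 ρ s1 s2 σ m _ ih =>
    intro t ht hm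
    obtain ⟨rfl, rfl⟩ := eq_of_singleton_eq_dec ht hm
    simp only [SeqTerm, Grd, reduceCtorEq, exists_false, or_false] at ht
    obtain ⟨u, hu, h⟩ := ih s2 (.inl ht.2) (decX_empty env s2)
    exact ⟨u, hu.sum2, h⟩
  | cons ρ c σ m _ ih =>
    intro t ht hm
    obtain ⟨rfl, rfl⟩ := eq_of_singleton_eq_dec ht hm
    obtain ⟨u, hu, h⟩ := ih (env c) (.inl (henv c).1) (decX_empty env _)
    exact ⟨u, hu.cons, h⟩
  | spref ρ a s σ m _ ih =>
    intro t ht hm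
    obtain ⟨rfl, rfl⟩ := eq_of_singleton_eq_dec ht hm
    simp only [SeqTerm, Grd, reduceCtorEq, exists_false, or_false] at ht
    obtain ⟨u, hu, h⟩ := ih s (.inl ht) (decX_empty env s)
    exact ⟨u, hu.spref, h⟩
  | scom m1 m2 m1' m2' σ1 σ2 σ h1 h2 _ _ _ _ =>
    intro t ht hm
    have hc := card_dec_le_one env ht
    rw [← hm, Multiset.card_add] at hc
    have := Multiset.card_pos.mpr h1.ne_zero
    have := Multiset.card_pos.mpr h2.ne_zero
    omega

/-! ### Team bisimulations -/

theorem rel_comp {A B C : Type*} {r : A → B → Prop} {p : B → C → Prop} {s : Multiset A}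
    {t : Multiset B} {u : Multiset C} (h1 : Multiset.Rel r s t) (h2 : Multiset.Rel p t u) :
    Multiset.Rel (Relation.Comp r p) s u := by
  induction h1 generalizing u with
  | zero => simpa using h2
  | cons hab _ ih =>
    obtain ⟨c, u', hbc, h, rfl⟩ := Multiset.rel_cons_left.mp h2
    exact .cons ⟨_, hab, hbc⟩ (ih h)

theorem exists_map_fst_snd_of_rel {A B : Type*} {r : A → B → Prop} {s : Multiset A}
    {t : Multiset B} (h : Multiset.Rel r s t) :
    ∃ l : Multiset (A × B), l.map Prod.fst = s ∧ l.map Prod.snd = t ∧ ∀ x ∈ l, r x.1 x.2 := by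
  induction h with
  | zero => exact ⟨0, by simp⟩
  | @cons a b _ _ hab _ ih =>
    obtain ⟨l, rfl, rfl, hl⟩ := ih
    refine ⟨(a, b) ::ₘ l, by simp, by simp, fun x hx => ?_⟩
    rcases Multiset.mem_cons.mp hx with rfl | hx
    · exact hab
    · exact hl x hx

theorem rel_map_fst_snd {A B : Type*} {r : A → B → Prop} {l : Multiset (A × B)}
    (h : ∀ x ∈ l, r x.1 x.2) : Multiset.Rel r (l.map Prod.fst) (l.map Prod.snd) :=
  Multiset.rel_map.mpr (Multiset.rel_refl_of_refl_on h)

/-- Every step of the first of two related terms is matched by the second. -/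
def Simulates (env : κ → FNM α κ) (B : FNM α κ → FNM α κ → Prop) : Prop :=
  ∀ s t, B s t → ∀ σ u, Step env s σ u →
    ∃ v, Step env t σ v ∧ Multiset.Rel B (components u) (components v)

/-- Team bisimulations: bisimulations on the terms of single places, where the markings
reached are related componentwise. -/
structure IsTeamBisim (env : κ → FNM α κ) (B : FNM α κ → FNM α κ → Prop) : Prop where
  placeTerm : ∀ s t, B s t → PlaceTerm s ∧ PlaceTerm t
  sim : Simulates env B
  sim_flip : Simulates env (flip B)

theorem IsTeamBisim.flip {env : κ → FNM α κ} {B : FNM α κ → FNM α κ → Prop}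
    (h : IsTeamBisim env B) : IsTeamBisim env (flip B) :=
  ⟨fun s t hst => (h.placeTerm t s hst).symm, h.sim_flip, h.sim⟩

/-- Team bisimilarity. -/
def TeamBisim (env : κ → FNM α κ) (s t : FNM α κ) : Prop :=
  ∃ B, IsTeamBisim env B ∧ B s t

theorem isTeamBisim_teamBisim (env : κ → FNM α κ) : IsTeamBisim env (TeamBisim env) where
  placeTerm := fun s t ⟨_, hB, hst⟩ => hB.placeTerm s t hst
  sim := by
    rintro s t ⟨B, hB, hst⟩ σ u hu
    obtain ⟨v, hv, h⟩ := hB.sim s t hst σ u hu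
    exact ⟨v, hv, h.mono fun a _ b _ hab => ⟨B, hB, hab⟩⟩
  sim_flip := by
    rintro s t ⟨B, hB, hst⟩ σ u hu
    obtain ⟨v, hv, h⟩ := hB.sim_flip s t hst σ u hu
    exact ⟨v, hv, h.mono fun a _ b _ hab => ⟨B, hB, hab⟩⟩

theorem TeamBisim.symm {env : κ → FNM α κ} {s t : FNM α κ} (h : TeamBisim env s t) :
    TeamBisim env t s := by
  obtain ⟨B, hB, hst⟩ := h
  exact ⟨_, hB.flip, hst⟩

theorem TeamBisim.trans {env : κ → FNM α κ} {s t u : FNM α κ} (h1 : TeamBisim env s t)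
    (h2 : TeamBisim env t u) : TeamBisim env s u := by
  have hT := isTeamBisim_teamBisim env
  have key : Simulates env (Relation.Comp (TeamBisim env) (TeamBisim env)) := by
    rintro s u ⟨t, hst, htu⟩ σ s' hs
    obtain ⟨t', ht, h1⟩ := hT.sim _ _ hst σ s' hs
    obtain ⟨u', hu, h2⟩ := hT.sim _ _ htu σ t' ht
    exact ⟨u', hu, rel_comp h1 h2⟩
  refine ⟨_, ⟨?_, key, ?_⟩, t, h1, h2⟩
  · rintro s u ⟨t, hst, htu⟩
    exact ⟨(hT.placeTerm _ _ hst).1, (hT.placeTerm _ _ htu).2⟩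
  · rintro s u ⟨t, hut, hts⟩ σ s' hs
    obtain ⟨v, hv, h⟩ := key s u ⟨t, hts.symm, hut.symm⟩ σ s' hs
    exact ⟨v, hv, h.mono fun a _ b _ ⟨c, hac, hcb⟩ => ⟨c, hcb.symm, hac.symm⟩⟩

theorem TeamBisim.of_step_iff {env : κ → FNM α κ}
    (henv : ∀ c, Grd (env c) ∧ VarFree (env c)) {s t : FNM α κ} (hs : PlaceTerm s)
    (ht : PlaceTerm t) (h : ∀ σ u, Step env s σ u ↔ Step env t σ u) : TeamBisim env s t := by
  refine ⟨fun a b => PlaceTerm a ∧ PlaceTerm b ∧ ∀ σ u, Step env a σ u ↔ Step env b σ u,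
    ⟨fun a b hab => ⟨hab.1, hab.2.1⟩, ?_, ?_⟩, hs, ht, h⟩
  · rintro a b ⟨ha, -, hab⟩ σ u hu
    obtain ⟨hr, hv⟩ := hu.rf_varFree henv ha.1 ha.2.1
    refine ⟨u, (hab σ u).mp hu, Multiset.rel_refl_of_refl_on fun x hx => ?_⟩
    have := placeTerm_of_mem_components hr hv hx
    exact ⟨this, this, fun _ _ => Iff.rfl⟩
  · rintro a b ⟨-, ha, hab⟩ σ u hu
    obtain ⟨hr, hv⟩ := hu.rf_varFree henv ha.1 ha.2.1
    refine ⟨u, (hab σ u).mpr hu, Multiset.rel_refl_of_refl_on fun x hx => ?_⟩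
    have := placeTerm_of_mem_components hr hv hx
    exact ⟨this, this, fun _ _ => Iff.rfl⟩

/-! ### Team bisimilarity is structure-preserving bisimilarity on sequential terms -/

theorem simulates_of_linkings {env : κ → FNM α κ}
    (henv : ∀ c, Grd (env c) ∧ VarFree (env c)) {B : FNM α κ → FNM α κ → Prop}
    (hp : ∀ s t, B s t → PlaceTerm s ∧ PlaceTerm t)
    (h : ∀ s t, B s t → ∀ σ m1, NetTr env {unresPlace s} σ m1 →
      ∃ m2, NetTr env {unresPlace t} σ m2 ∧
        Multiset.Rel (fun x y => ∀ a b, x = unresPlace a → y = unresPlace b → B a b) m1 m2) :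
    Simulates env B := by
  intro s t hst σ u hu
  obtain ⟨hs, ht⟩ := hp s t hst
  have htr := hu.tr henv hs.1
  rw [hs.dec_eq] at htr
  obtain ⟨m2, hm2, hrel⟩ := h s t hst σ _ ⟨htr, hu.unres⟩
  obtain ⟨v, hv, rfl⟩ := hm2.1.exists_step henv t ht.1 (ht.dec_eq env).symm
  refine ⟨v, hv, ?_⟩
  rw [dec_eq_map_components env (hu.rf_varFree henv hs.1 hs.2.1).1,
    dec_eq_map_components env (hv.rf_varFree henv ht.1 ht.2.1).1, Multiset.rel_map] at hrel
  exact hrel.mono fun a _ b _ hab => hab a b rfl rfl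

theorem IsSPB.isTeamBisim {env : κ → FNM α κ} (henv : ∀ c, Grd (env c) ∧ VarFree (env c))
    {R : Set (Multiset (Place α κ × Place α κ))} (hR : IsSPB env R) :
    IsTeamBisim env fun s t => ∃ l ∈ R, (unresPlace s, unresPlace t) ∈ l := by
  classical
  have hp : ∀ s t, (∃ l ∈ R, (unresPlace s, unresPlace t) ∈ l) →
      PlaceTerm s ∧ PlaceTerm t := by
    rintro s t ⟨l, hl, hst⟩
    exact ((hR l hl).1 _ hst).imp isPlace_unresPlace.mp isPlace_unresPlace.mp
  refine ⟨hp, ?_, ?_⟩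
  · refine simulates_of_linkings henv hp ?_
    rintro s t ⟨l, hl, hst⟩ σ m1 hm1
    obtain ⟨m2, cb, hm2, rfl, rfl, hcb⟩ :=
      ((hR l hl).2 _ (Multiset.singleton_le.mpr hst)).1 σ m1 (by simpa [pi1] using hm1)
    refine ⟨pi2 cb, by simpa [pi2] using hm2, rel_map_fst_snd ?_⟩
    rintro ⟨x, y⟩ hx a b rfl rfl
    exact ⟨_, hcb, Multiset.mem_add.mpr (.inr hx)⟩
  · refine simulates_of_linkings henv (fun s t h => (hp t s h).symm) ?_
    rintro s t ⟨l, hl, hst⟩ σ m1 hm1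
    obtain ⟨m2, cb, hm2, rfl, rfl, hcb⟩ :=
      ((hR l hl).2 _ (Multiset.singleton_le.mpr hst)).2 σ m1 (by simpa [pi2] using hm1)
    refine ⟨pi1 cb, by simpa [pi1] using hm2, Multiset.rel_flip.mp (rel_map_fst_snd ?_)⟩
    rintro ⟨x, y⟩ hx a b rfl rfl
    exact ⟨_, hcb, Multiset.mem_add.mpr (.inr hx)⟩

/-- The relation on places without restricted names given by a relation on terms. -/
def liftRel (B : FNM α κ → FNM α κ → Prop) (x y : Place α κ) : Prop :=
  ∃ s t, x = unresPlace s ∧ y = unresPlace t ∧ B s t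

theorem liftRel_flip {B : FNM α κ → FNM α κ → Prop} {x y : Place α κ} :
    liftRel (flip B) x y ↔ liftRel B y x := by
  constructor <;> exact fun ⟨s, t, hx, hy, h⟩ => ⟨t, s, hy, hx, h⟩

theorem adm_of_rel_liftRel {env : κ → FNM α κ} {B : FNM α κ → FNM α κ → Prop}
    {m n : Multiset (Place α κ)} (h : Multiset.Rel (liftRel B) m n) : Adm env n := by
  rintro a ⟨-, s, hs, -, ha⟩
  obtain ⟨_, _, _, t, _, rfl, _⟩ := Multiset.exists_mem_of_rel_of_mem (Multiset.rel_flip.mpr h) hs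
  exact ha

theorem IsTeamBisim.match_singleton {env : κ → FNM α κ}
    (henv : ∀ c, Grd (env c) ∧ VarFree (env c)) {B : FNM α κ → FNM α κ → Prop}
    (hB : IsTeamBisim env B) {x : Place α κ} {m' n : Multiset (Place α κ)} {σ : Lbl α}
    (h : Tr env {x} σ m') (hmn : Multiset.Rel (liftRel B) {x} n) :
    ∃ n', Tr env n σ n' ∧ Multiset.Rel (liftRel B) m' n' := by
  obtain ⟨y, n0, ⟨s, t, rfl, rfl, hst⟩, hn0, rfl⟩ := Multiset.rel_cons_left.mp hmn
  obtain rfl := Multiset.rel_zero_left.mp hn0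
  obtain ⟨hs, ht⟩ := hB.placeTerm s t hst
  obtain ⟨u, hu, rfl⟩ := h.exists_step henv s hs.1 (hs.dec_eq env).symm
  obtain ⟨v, hv, huv⟩ := hB.sim s t hst σ u hu
  have htr := hv.tr henv ht.1
  rw [ht.dec_eq] at htr
  refine ⟨_, htr, ?_⟩
  rw [dec_eq_map_components env (hu.rf_varFree henv hs.1 hs.2.1).1,
    dec_eq_map_components env (hv.rf_varFree henv ht.1 ht.2.1).1, Multiset.rel_map]
  exact huv.mono fun a _ b _ hab => ⟨a, b, rfl, rfl, hab⟩

theorem IsTeamBisim.match_tr {env : κ → FNM α κ}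
    (henv : ∀ c, Grd (env c) ∧ VarFree (env c)) {B : FNM α κ → FNM α κ → Prop}
    (hB : IsTeamBisim env B) {m m' : Multiset (Place α κ)} {σ : Lbl α}
    (h : Tr env m σ m') : ∀ n, Multiset.Rel (liftRel B) m n →
    ∃ n', Tr env n σ n' ∧ Multiset.Rel (liftRel B) m' n' := by
  induction h with
  | pref ρ mu s => exact fun n => hB.match_singleton henv (.pref ρ mu s)
  | sum1 ρ s1 s2 σ m h _ => exact fun n => hB.match_singleton henv (.sum1 ρ s1 s2 σ m h)
  | sum2 ρ s1 s2 σ m h _ => exact fun n => hB.match_singleton henv (.sum2 ρ s1 s2 σ m h)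
  | cons ρ c σ m h _ => exact fun n => hB.match_singleton henv (.cons ρ c σ m h)
  | spref ρ a s σ m h _ => exact fun n => hB.match_singleton henv (.spref ρ a s σ m h)
  | scom m1 m2 m1' m2' σ1 σ2 σ _ _ _ hsync ih1 ih2 =>
    intro n hn
    obtain ⟨n1, n2, h1, h2, rfl⟩ := Multiset.rel_add_left.mp hn
    obtain ⟨n1', ht1, hr1⟩ := ih1 n1 h1
    obtain ⟨n2', ht2, hr2⟩ := ih2 n2 h2
    exact ⟨n1' + n2', .scom _ _ _ _ _ _ _ ht1 ht2 (adm_of_rel_liftRel hn) hsync, hr1.add hr2⟩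

theorem IsTeamBisim.isSPB {env : κ → FNM α κ} (henv : ∀ c, Grd (env c) ∧ VarFree (env c))
    {B : FNM α κ → FNM α κ → Prop} (hB : IsTeamBisim env B) :
    IsSPB env {l | ∀ x ∈ l, liftRel B x.1 x.2} := by
  classical
  intro l hl
  refine ⟨fun x hx => ?_, fun c hc => ⟨fun σ m1 hm1 => ?_, fun σ m2 hm2 => ?_⟩⟩
  · obtain ⟨s, t, h1, h2, hst⟩ := hl x hx
    rw [h1, h2, isPlace_unresPlace, isPlace_unresPlace]
    exact hB.placeTerm s t hst
  · have hrel := rel_map_fst_snd fun x hx => hl x (Multiset.mem_of_le hc hx)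
    obtain ⟨n', ht, hr⟩ := hB.match_tr henv hm1.1 _ hrel
    obtain ⟨cb, h1, h2, hcb⟩ := exists_map_fst_snd_of_rel hr
    refine ⟨n', cb, ⟨ht, hm1.2⟩, h1, h2, fun x hx => ?_⟩
    rcases Multiset.mem_add.mp hx with hx | hx
    · exact hl x (Multiset.mem_of_le (Multiset.sub_le_self _ _) (by convert hx))
    · exact hcb x hx
  · have hrel := Multiset.rel_flip.mpr
      (rel_map_fst_snd fun x hx => hl x (Multiset.mem_of_le hc hx))
    obtain ⟨n', ht, hr⟩ := hB.flip.match_tr henv hm2.1 _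
      (hrel.mono fun _ _ _ _ h => liftRel_flip.mpr h)
    obtain ⟨cb, h1, h2, hcb⟩ := exists_map_fst_snd_of_rel
      (Multiset.rel_flip.mpr (hr.mono fun _ _ _ _ h => liftRel_flip.mp h))
    refine ⟨n', cb, ⟨ht, hm2.2⟩, h1, h2, fun x hx => ?_⟩
    rcases Multiset.mem_add.mp hx with hx | hx
    · exact hl x (Multiset.mem_of_le (Multiset.sub_le_self _ _) (by convert hx))
    · exact hcb x hx

theorem speq_iff_teamBisim {env : κ → FNM α κ}
    (henv : ∀ c, Grd (env c) ∧ VarFree (env c)) {s t : FNM α κ} (hs : PlaceTerm s)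
    (ht : PlaceTerm t) : SPEq env s t ↔ TeamBisim env s t := by
  constructor
  · rintro ⟨R, hR, l, hl, h1, h2⟩
    refine ⟨_, hR.isTeamBisim henv, l, hl, ?_⟩
    rw [hs.dec_eq] at h1
    rw [ht.dec_eq] at h2
    obtain ⟨⟨x, y⟩, rfl, hx⟩ := Multiset.map_eq_singleton.mp h1
    obtain rfl : x = unresPlace s := hx
    obtain rfl : y = unresPlace t := by simpa [pi2] using h2
    exact Multiset.mem_singleton_self _
  · rintro ⟨B, hB, hst⟩
    refine ⟨_, hB.isSPB henv, {(unresPlace s, unresPlace t)}, ?_, ?_, ?_⟩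
    · intro x hx
      obtain rfl := Multiset.mem_singleton.mp hx
      exact ⟨s, t, rfl, rfl, hst⟩
    · simp [pi1, hs.dec_eq]
    · simp [pi2, ht.dec_eq]

/-! ### Substitution -/

theorem subst_of_varFree (r : FNM α κ) {t : FNM α κ} (h : VarFree t) : subst r t = t := by
  induction t <;> simp_all [subst, VarFree]

theorem varFree_subst {r : FNM α κ} (hr : VarFree r) (t : FNM α κ) : VarFree (subst r t) := by
  induction t <;> simp_all [subst, VarFree]

theorem grd_rf_subst {r : FNM α κ} (hr : RF r) (t : FNM α κ) :
    (Grd t → Grd (subst r t)) ∧ (RF t → RF (subst r t)) := by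
  induction t <;> simp_all [subst, Grd, RF]

theorem PlaceTerm.subst {r : FNM α κ} (hr : PlaceTerm r) {u : FNM α κ} (hu : SeqTerm u)
    (h0 : u ≠ FNM.nil) : PlaceTerm (subst r u) := by
  refine ⟨?_, varFree_subst hr.2.1 u, ?_⟩
  · rcases hu with hu | ⟨c, rfl⟩ | rfl
    · exact .inl ((grd_rf_subst hr.1.rf u).1 hu)
    · exact .inr (.inl ⟨c, rfl⟩)
    · exact hr.1
  · have := hr.2.2
    cases u <;> simp_all [FNM.subst]

/-- The steps of an instance of a guarded term do not depend on the term substituted. -/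
theorem Step.exists_subst {env : κ → FNM α κ} {r t w : FNM α κ} {σ : Lbl α} (ht : Grd t)
    (h : Step env (subst r t) σ w) :
    ∃ u, RF u ∧ w = subst r u ∧ ∀ r', Step env (subst r' t) σ (subst r' u) := by
  induction t generalizing σ w with
  | pref mu t _ =>
    cases h
    exact ⟨t, ht, rfl, fun r' => .pref _ _⟩
  | spref a s ih =>
    cases h with
    | spref h =>
      obtain ⟨u, hu, rfl, hall⟩ := ih ht h
      exact ⟨u, hu, rfl, fun r' => (hall r').spref⟩
  | sum s1 s2 ih1 ih2 =>
    cases h with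
    | sum1 h =>
      obtain ⟨u, hu, rfl, hall⟩ := ih1 ht.1 h
      exact ⟨u, hu, rfl, fun r' => (hall r').sum1⟩
    | sum2 h =>
      obtain ⟨u, hu, rfl, hall⟩ := ih2 ht.2 h
      exact ⟨u, hu, rfl, fun r' => (hall r').sum2⟩
  | nil => cases h
  | _ => exact ht.elim

theorem rel_components_subst {r r' : FNM α κ} (hr : PlaceTerm r) (hr' : PlaceTerm r')
    {v : FNM α κ} (hv : RF v) :
    Multiset.Rel (fun a b => ∃ u, SeqTerm u ∧ u ≠ FNM.nil ∧ a = subst r u ∧ b = subst r' u)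
      (components (subst r v)) (components (subst r' v)) := by
  have key : ∀ u : FNM α κ, SeqTerm u → u ≠ FNM.nil →
      Multiset.Rel (fun a b => ∃ u, SeqTerm u ∧ u ≠ FNM.nil ∧ a = subst r u ∧ b = subst r' u)
        (components (subst r u)) (components (subst r' u)) := by
    intro u hu h0
    have h := hr.subst hu h0
    have h' := hr'.subst hu h0
    rw [h.1.components_eq h.2.2, h'.1.components_eq h'.2.2]
    exact .cons ⟨u, hu, h0, rfl, rfl⟩ .zero
  induction v with
  | nil => exact .zero
  | par t1 t2 ih1 ih2 => exact (ih1 hv.1).add (ih2 hv.2)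
  | res a p => exact hv.elim
  | var => exact key _ (.inr (.inr rfl)) (by simp)
  | const c => exact key _ (.inr (.inl ⟨c, rfl⟩)) (by simp)
  | pref mu t => exact key _ (.inl hv) (by simp)
  | spref a s => exact key _ (.inl hv) (by simp)
  | sum s1 s2 => exact key _ (.inl hv) (by simp)

/-! ### Folding -/

theorem step_const_iff {env : κ → FNM α κ} {c : κ} {σ : Lbl α} {u : FNM α κ} :
    Step env (.const c) σ u ↔ Step env (env c) σ u :=
  ⟨fun h => by cases h; assumption, .cons⟩

theorem placeTerm_const (c : κ) : PlaceTerm (FNM.const c : FNM α κ) :=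
  ⟨.inr (.inl ⟨c, rfl⟩), trivial, by simp⟩

theorem PlaceTerm.of_grd {t : FNM α κ} (h : Grd t) (hv : VarFree t) (h0 : t ≠ FNM.nil) :
    PlaceTerm t :=
  ⟨.inl h, hv, h0⟩

theorem teamBisim_folding {env : κ → FNM α κ} (henv : ∀ c, Grd (env c) ∧ VarFree (env c))
    {c : κ} {p q : FNM α κ} (hp : Grd p)
    (hc : env c = subst (FNM.const c) p) (hq : PlaceTerm q)
    (h : TeamBisim env q (subst q p)) : TeamBisim env (FNM.const c) q := by
  have hT := isTeamBisim_teamBisim env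
  have hC := placeTerm_const (α := α) c
  let B : FNM α κ → FNM α κ → Prop := fun s w =>
    ∃ u, SeqTerm u ∧ u ≠ FNM.nil ∧ s = subst (FNM.const c) u ∧ TeamBisim env (subst q u) w
  have of_teamBisim : ∀ s w, TeamBisim env s w → B s w := by
    intro s w hsw
    have hs := (hT.placeTerm s w hsw).1
    refine ⟨s, hs.1, hs.2.2, (subst_of_varFree _ hs.2.1).symm, ?_⟩
    rwa [subst_of_varFree _ hs.2.1]
  have rel_subst : ∀ v m, RF v → Multiset.Rel (TeamBisim env) (components (subst q v)) m →
      Multiset.Rel B (components (subst (FNM.const c) v)) m := fun v m hv hm =>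
    (rel_comp (rel_components_subst hC hq hv) hm).mono
      fun _ _ _ _ ⟨_, ⟨u, hu, hu0, ha, hb⟩, hbw⟩ => ⟨u, hu, hu0, ha, hb ▸ hbw⟩
  have sim_grd : ∀ u w, Grd u → TeamBisim env (subst q u) w → ∀ σ s',
      Step env (subst (FNM.const c) u) σ s' →
      ∃ v, Step env w σ v ∧ Multiset.Rel B (components s') (components v) := by
    intro u w hu huw σ s' hs
    obtain ⟨v, hv, rfl, hstep⟩ := hs.exists_subst hu
    obtain ⟨w', hw, hrel⟩ := hT.sim _ _ huw σ _ (hstep q)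
    exact ⟨w', hw, rel_subst v _ hv hrel⟩
  have sim_flip_grd : ∀ u w, Grd u → TeamBisim env (subst q u) w → ∀ σ w', Step env w σ w' →
      ∃ v, Step env (subst (FNM.const c) u) σ v ∧
        Multiset.Rel B (components v) (components w') := by
    intro u w hu huw σ w' hw
    obtain ⟨x, hx, hrel⟩ := hT.sim_flip _ _ huw σ _ hw
    obtain ⟨v, hv, rfl, hstep⟩ := hx.exists_subst hu
    exact ⟨_, hstep _, rel_subst v _ hv (Multiset.rel_flip.mp hrel)⟩
  refine ⟨B, ⟨?_, ?_, ?_⟩, FNM.var, .inr (.inr rfl), by simp, rfl, ?_⟩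
  · rintro s w ⟨u, hu, hu0, rfl, huw⟩
    exact ⟨hC.subst hu hu0, (hT.placeTerm _ _ huw).2⟩
  · rintro s w ⟨u, hu | ⟨d, rfl⟩ | rfl, -, rfl, huw⟩ σ s' hs
    · exact sim_grd u w hu huw σ s' hs
    · obtain ⟨v, hv, hrel⟩ := hT.sim _ _ huw σ s' hs
      exact ⟨v, hv, hrel.mono fun a _ b _ => of_teamBisim a b⟩
    · exact sim_grd p w hp (h.symm.trans huw) σ s' (hc ▸ step_const_iff.mp hs)
  · rintro w s ⟨u, hu | ⟨d, rfl⟩ | rfl, -, rfl, huw⟩ σ w' hw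
    · obtain ⟨v, hv, hrel⟩ := sim_flip_grd u w hu huw σ w' hw
      exact ⟨v, hv, Multiset.rel_flip.mpr hrel⟩
    · obtain ⟨v, hv, hrel⟩ := hT.sim_flip _ _ huw σ w' hw
      exact ⟨v, hv, hrel.mono fun a _ b _ => of_teamBisim b a⟩
    · obtain ⟨v, hv, hrel⟩ := sim_flip_grd p w hp (h.symm.trans huw) σ w' hw
      exact ⟨v, step_const_iff.mpr (hc ▸ hv), Multiset.rel_flip.mpr hrel⟩
  · exact .of_step_iff henv hq hq fun _ _ => Iff.rfl

/-- A term bisimilar to an instance of a guarded term other than `0` is not `0`. -/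
theorem SPEq.ne_nil {env : κ → FNM α κ} {p q : FNM α κ} (hp : Grd p) (hp0 : p ≠ FNM.nil)
    (h : SPEq env q (subst q p)) : q ≠ FNM.nil := by
  rintro rfl
  obtain ⟨R, -, l, -, h1, h2⟩ := h
  obtain rfl : l = 0 := by simpa [pi1, dec] using h1
  cases p <;> simp_all [pi2, dec, FNM.subst, Grd]

end FNM

open FNM in
/-- Laws of process constants up to structure-preserving bisimilarity, where `env c` is
the body of the constant `c`. In (folding), `p ≠ 0` holds in particular whenever the
variable `x` occurs in `p`. -/
theorem speq_constant_laws {α κ : Type*} [Finite α] [Finite κ]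
    (env : κ → FNM α κ) (henv : ∀ c, Grd (env c) ∧ VarFree (env c))
    (c : κ) :
    -- (stuck)
    (env c = FNM.nil → SPEq env (FNM.const c) (FNM.sum FNM.nil FNM.nil)) ∧
    -- (unfolding)
    (∀ p : FNM α κ, Grd p → VarFree p → env c = p → p ≠ FNM.nil →
      SPEq env (FNM.const c) p) ∧
    -- (folding)
    (∀ p q : FNM α κ, Grd p → p ≠ FNM.nil → env c = subst (FNM.const c) p →
      SeqTerm q → VarFree q → SPEq env q (subst q p) →
      SPEq env (FNM.const c) q) := by
  have hC := placeTerm_const (α := α) c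
  refine ⟨fun hc => ?_, fun p hp hv hc h0 => ?_, fun p q hp hp0 hc hs hv h => ?_⟩
  · have ht : PlaceTerm (FNM.sum FNM.nil FNM.nil : FNM α κ) :=
      .of_grd ⟨trivial, trivial⟩ ⟨trivial, trivial⟩ (by simp)
    refine (speq_iff_teamBisim henv hC ht).mpr (.of_step_iff henv hC ht fun σ u => ?_)
    rw [step_const_iff, hc]
    refine ⟨fun h => (h.ne_nil rfl).elim, fun h => ?_⟩
    cases h <;> assumption
  · have ht := PlaceTerm.of_grd hp hv h0
    refine (speq_iff_teamBisim henv hC ht).mpr (.of_step_iff henv hC ht fun σ u => ?_)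
    rw [step_const_iff, hc]
  · have hq : PlaceTerm q := ⟨hs, hv, h.ne_nil hp hp0⟩
    rw [speq_iff_teamBisim henv hq (hq.subst (.inl hp) hp0)] at h
    exact (speq_iff_teamBisim henv hC hq).mpr (teamBisim_folding henv hp hc hq h)
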